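/- Let Ω ⊂ ℝ² be a nonempty bounded open simply connected set and A = (A₁,A₂) a vector potential with A₁, A₂ smooth on a neighborhood of the closure of Ω, whose magnetic field B = ∂₁A₂ − ∂₂A₁ does not vanish identically on Ω. Then there exists ε > 0 (depending on B and Ω) such that for every h > 0 the lowest Dirichlet Pauli eigenvalue satisfies λ_{P₋}(h) ≥ λ^D(Ω) · h² · exp(−ε/h). -/

import Mathlib

/-!
The proof rests on the factorisation of the Pauli operator through the Cauchy–Riemann operator.
With `D_j = h∂_j − iA_j`, integration by parts gives `Q_h(u) = ∫ |D₁u + iD₂u|²` for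
`u ∈ C_c^∞(Ω)` (`pauli_identity`, `pauliQ_eq`); with `A = 0`, `h = 1` the same identity reads
`∫ |∇v|² = ∫ |∂₁v + i∂₂v|²` (`dirichlet_eq`).

Cut `A` off to a smooth compactly supported field `a` equal to `A` near each point of `Ω`, and solve
`(∂₁ + i∂₂) g = i(a₁ + i a₂)` on the whole plane by the Cauchy transform (`exists_dbar`, which
follows from the Cauchy–Pompeiu formula `integral_inv_mul_dbar`). Substituting `u = e^{g/h} v`
turns `D₁u + iD₂u` into `h e^{g/h} (∂₁v + i∂₂v)`. The function `g` plays the role of a scalar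
potential and a gauge function together, so these need not be constructed separately. If
`|Re g| ≤ C` on `Ω`, then `|e^{±g/h}|² ≥ e^{−2C/h}`, and hence (`key_bound`)
`Q_h(u) ≥ h² e^{−2C/h} ∫ |∇v|² ≥ h² e^{−2C/h} λ^D ∫ |v|² ≥ λ^D h² e^{−4C/h} ∫ |u|²`.
The theorem holds with `ε = 4C + 1`, where the `1` only ensures `ε > 0`.
-/

open MeasureTheory Filter Topology

noncomputable section

abbrev E2 : Type := EuclideanSpace ℝ (Fin 2)

/-- Partial derivative of a complex-valued function in the `i`-th coordinate direction. -/
def pdC (i : Fin 2) (f : E2 → ℂ) (x : E2) : ℂ :=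
  fderiv ℝ f x (EuclideanSpace.single i 1)

/-- Partial derivative of a real-valued function in the `i`-th coordinate direction. -/
def pdR (i : Fin 2) (f : E2 → ℝ) (x : E2) : ℝ :=
  fderiv ℝ f x (EuclideanSpace.single i 1)

/-- The Laplacian `Δf = ∂₁²f + ∂₂²f`. -/
def lapl (f : E2 → ℝ) (x : E2) : ℝ :=
  pdR 0 (pdR 0 f) x + pdR 1 (pdR 1 f) x

/-- The Pauli quadratic form
`Q_h(u) = ∫_Ω (|h∂₁u − iA₁u|² + |h∂₂u − iA₂u|²) dx − h∫_Ω B|u|² dx`. -/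
def pauliQ (Ω : Set E2) (A₁ A₂ B : E2 → ℝ) (h : ℝ) (u : E2 → ℂ) : ℝ :=
  (∫ x in Ω, (‖(h : ℂ) * pdC 0 u x - Complex.I * (A₁ x : ℂ) * u x‖ ^ 2
      + ‖(h : ℂ) * pdC 1 u x - Complex.I * (A₂ x : ℂ) * u x‖ ^ 2))
    - h * ∫ x in Ω, B x * ‖u x‖ ^ 2

/-- `u ∈ C_c^∞(Ω; ℂ)`. -/
def IsCptSmoothIn (Ω : Set E2) (u : E2 → ℂ) : Prop :=
  ContDiff ℝ (⊤ : ℕ∞) u ∧ HasCompactSupport u ∧ tsupport u ⊆ Ω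

/-- The lowest Dirichlet Pauli eigenvalue
`λ_{P₋}(h) = inf { Q_h(u)/∫_Ω|u|² : 0 ≠ u ∈ C_c^∞(Ω;ℂ) }`. -/
def lambdaP (Ω : Set E2) (A₁ A₂ B : E2 → ℝ) (h : ℝ) : ℝ :=
  sInf { r | ∃ u : E2 → ℂ, IsCptSmoothIn Ω u ∧ u ≠ 0 ∧
    r = pauliQ Ω A₁ A₂ B h u / ∫ x in Ω, ‖u x‖ ^ 2 }

/-- The lowest Dirichlet eigenvalue of the Laplacian on `Ω`. -/
def lambdaD (Ω : Set E2) : ℝ :=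
  sInf { r | ∃ v : E2 → ℂ, IsCptSmoothIn Ω v ∧ v ≠ 0 ∧
    r = (∫ x in Ω, (‖pdC 0 v x‖ ^ 2 + ‖pdC 1 v x‖ ^ 2)) / ∫ x in Ω, ‖v x‖ ^ 2 }

/-! ### The Cauchy transform -/

open Complex in
/-- The Cauchy–Pompeiu formula at the origin. In polar coordinates `w = r e^{iθ}` the integrand,
with the Jacobian `r`, is `∂_r f + (i/r) ∂_θ f`: the radial derivative integrates to `−f 0` along
every ray, and the angular derivative integrates to `0` over every circle. -/
lemma integral_inv_mul_dbar (f : ℂ → ℂ) (hf : ContDiff ℝ 1 f) (hc : HasCompactSupport f) :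
    ∫ w, w⁻¹ * (fderiv ℝ f w 1 + I * fderiv ℝ f w I) = -(2 * Real.pi) * f 0 := by
  set e : ℝ → ℂ := fun θ => (Real.cos θ : ℂ) + Real.sin θ * I with he
  have hec : Continuous e := by fun_prop
  have hed : ∀ θ, HasDerivAt e (I * e θ) θ := by
    intro θ
    have h1 := (Real.hasDerivAt_cos θ).ofReal_comp
    have h2 := ((Real.hasDerivAt_sin θ).ofReal_comp).mul_const I
    refine (h1.add h2).congr_deriv ?_
    simp only [he, ofReal_neg]
    linear_combination -(Real.sin θ : ℂ) * I_mul_I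
  have hnorm : ∀ θ, ‖e θ‖ = 1 := by
    intro θ
    simp [he, Complex.norm_cos_add_sin_mul_I]
  have hfd : Continuous (fderiv ℝ f) := hf.continuous_fderiv one_ne_zero
  obtain ⟨R, hR⟩ := (hc.fderiv ℝ).isCompact.isBounded.exists_norm_le
  have hzero : ∀ z : ℂ, R < ‖z‖ → fderiv ℝ f z = 0 := fun z hz => by
    by_contra h
    exact absurd (hR z (subset_tsupport _ h)) (not_le.mpr hz)
  -- `F 1 (r, θ) = ∂_r f(r e^{iθ})` and `F I (r, θ) = r⁻¹ ∂_θ f(r e^{iθ})`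
  let F : ℂ → ℝ × ℝ → ℂ := fun c p => fderiv ℝ f (p.1 * e p.2) (c * e p.2)
  have hFc : ∀ c, Continuous (F c) := by
    intro c
    exact (hfd.comp (by fun_prop)).clm_apply (by fun_prop)
  have hFz : ∀ c (p : ℝ × ℝ), R < |p.1| → F c p = 0 := by
    intro c p hp
    simp only [F]
    rw [hzero _ (by simpa [hnorm] using hp)]; simp
  have hFi : ∀ c, IntegrableOn (F c) (Set.Ioi (0:ℝ) ×ˢ Set.Ioo (-Real.pi) Real.pi)
      (volume.prod volume) := by
    intro c
    have h1 : IntegrableOn (F c) (Set.Icc (0:ℝ) R ×ˢ Set.Icc (-Real.pi) Real.pi)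
        (volume.prod volume) :=
      (hFc c).continuousOn.integrableOn_compact (isCompact_Icc.prod isCompact_Icc)
    refine h1.of_forall_sdiff_eq_zero (measurableSet_Ioi.prod measurableSet_Ioo) ?_
    rintro ⟨r, θ⟩ ⟨⟨hr, hθ⟩, hn⟩
    apply hFz
    by_contra hcon
    push Not at hcon
    have hr' : (0:ℝ) < r := hr
    rw [abs_of_pos hr'] at hcon
    exact hn ⟨⟨hr'.le, hcon⟩, ⟨hθ.1.le, hθ.2.le⟩⟩
  have hrad : ∀ θ : ℝ, ∫ r in Set.Ioi (0:ℝ), F 1 (r, θ) = - f 0 := by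
    intro θ
    have hd : ∀ r : ℝ, HasDerivAt (fun r : ℝ => f (r * e θ)) (F 1 (r, θ)) r := by
      intro r
      have h1 : HasDerivAt (fun r : ℝ => (r : ℂ) * e θ) (1 * e θ) r :=
        (hasDerivAt_id r).ofReal_comp.mul_const _
      exact ((hf.differentiable one_ne_zero _).hasFDerivAt).comp_hasDerivAt r h1
    have hcs : HasCompactSupport (fun r : ℝ => f (r * e θ)) := by
      obtain ⟨R', hR'⟩ := hc.isCompact.isBounded.exists_norm_le
      refine HasCompactSupport.intro (isCompact_Icc (a := -R') (b := R')) fun r hr => ?_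
      by_contra h
      have := hR' _ (subset_tsupport _ h)
      simp only [norm_mul, hnorm, mul_one, norm_real, Real.norm_eq_abs] at this
      exact hr (abs_le.mp this)
    have hcd : ContDiff ℝ 1 (fun r : ℝ => f (r * e θ)) :=
      hf.comp (ofRealCLM.contDiff.mul contDiff_const)
    have := hcs.integral_Ioi_deriv_eq hcd 0
    rw [funext fun r => (hd r).deriv] at this
    simpa using this
  have hang : ∀ r ∈ Set.Ioi (0:ℝ), ∫ θ in Set.Ioo (-Real.pi) Real.pi, F I (r, θ) = 0 := by
    intro r hr
    have hr0 : (r : ℂ) ≠ 0 := by exact_mod_cast (ne_of_gt hr)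
    have hd : ∀ θ : ℝ, HasDerivAt (fun θ : ℝ => (r : ℂ)⁻¹ * f (r * e θ)) (F I (r, θ)) θ := by
      intro θ
      have h1 : HasDerivAt (fun θ : ℝ => (r : ℂ) * e θ) (r * (I * e θ)) θ :=
        (hed θ).const_mul _
      have h2 := (((hf.differentiable one_ne_zero _).hasFDerivAt).comp_hasDerivAt θ h1).const_mul
        ((r : ℂ)⁻¹)
      refine h2.congr_deriv ?_
      have : (r : ℂ) * (I * e θ) = r • (I * e θ) := by simp
      rw [this, map_smul, real_smul, inv_mul_cancel_left₀ hr0]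
    rw [← integral_Ioc_eq_integral_Ioo, ← intervalIntegral.integral_of_le (by linarith [Real.pi_pos]),
      intervalIntegral.integral_eq_sub_of_hasDerivAt (fun θ _ => hd θ)
        (((hFc I).comp (by fun_prop : Continuous fun θ : ℝ => (r, θ))).intervalIntegrable _ _)]
    simp [he]
  rw [← Complex.integral_comp_polarCoord_symm, polarCoord_target]
  have hcongr : ∀ p ∈ Set.Ioi (0:ℝ) ×ˢ Set.Ioo (-Real.pi) Real.pi,
      p.1 • ((Complex.polarCoord.symm p)⁻¹ * (fderiv ℝ f (Complex.polarCoord.symm p) 1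
        + I * fderiv ℝ f (Complex.polarCoord.symm p) I)) = F 1 p + I * F I p := by
    rintro ⟨r, θ⟩ ⟨hr, -⟩
    have hr0 : (r : ℂ) ≠ 0 := by exact_mod_cast (ne_of_gt hr)
    have he0 : e θ ≠ 0 := norm_ne_zero_iff.mp (by rw [hnorm]; exact one_ne_zero)
    have hL : ∀ L : ℂ →L[ℝ] ℂ, e θ * (L (1 * e θ) + I * L (I * e θ)) = L 1 + I * L I := by
      intro L
      have h1 : 1 * e θ = Real.cos θ • (1:ℂ) + Real.sin θ • I := by simp [he]
      have h2 : I * e θ = (-Real.sin θ) • (1:ℂ) + Real.cos θ • I := by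
        simp only [he, real_smul, ofReal_neg]
        linear_combination (Real.sin θ : ℂ) * I_mul_I
      have h3 : ((Real.cos θ : ℂ)) ^ 2 + (Real.sin θ : ℂ) ^ 2 = 1 := by
        exact_mod_cast Real.cos_sq_add_sin_sq θ
      rw [h1, h2, map_add, map_add, map_smul, map_smul, map_smul, map_smul]
      simp only [he, real_smul, ofReal_neg]
      linear_combination (L 1 + I * L I) * h3
        + (-(Real.sin θ : ℂ) ^ 2 * L 1 + Real.cos θ * Real.sin θ * L I) * I_sq
    rw [Complex.polarCoord_symm_apply]
    change (r : ℝ) • (((r : ℂ) * e θ)⁻¹ * (fderiv ℝ f (r * e θ) 1 + I * fderiv ℝ f (r * e θ) I))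
      = fderiv ℝ f (r * e θ) (1 * e θ) + I * fderiv ℝ f (r * e θ) (I * e θ)
    rw [← hL, real_smul]
    field_simp
  rw [setIntegral_congr_fun (measurableSet_Ioi.prod measurableSet_Ioo) hcongr]
  rw [Measure.volume_eq_prod, integral_add (hFi 1) ((hFi I).const_mul I), integral_const_mul]
  have e1 : ∫ p in Set.Ioi (0:ℝ) ×ˢ Set.Ioo (-Real.pi) Real.pi, F 1 p ∂(volume.prod volume)
      = -(2 * Real.pi) * f 0 := by
    have h1 : IntegrableOn (fun z : ℝ × ℝ => F 1 z.swap)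
        (Set.Ioo (-Real.pi) Real.pi ×ˢ Set.Ioi (0:ℝ)) (volume.prod volume) := (hFi 1).swap
    rw [← setIntegral_prod_swap, setIntegral_prod _ h1]
    simp only [Prod.swap, hrad]
    have h2 : Real.pi + Real.pi = 2 * Real.pi := by ring
    simp [h2, Real.pi_pos.le]
  have e2 : ∫ p in Set.Ioi (0:ℝ) ×ˢ Set.Ioo (-Real.pi) Real.pi, F I p ∂(volume.prod volume)
      = 0 := by
    rw [setIntegral_prod _ (hFi I), setIntegral_congr_fun measurableSet_Ioi hang]
    simp
  rw [e1, e2]; simp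

open Complex in
/-- Solvability of `(∂₁ + i∂₂) g = a` for test functions `a`: take the convolution of `a` with
`1/(2πw)`, the fundamental solution of `∂₁ + i∂₂`. -/
lemma exists_dbar (a : ℂ → ℂ) (ha : ContDiff ℝ (⊤ : ℕ∞) a) (hc : HasCompactSupport a) :
    ∃ g : ℂ → ℂ, ContDiff ℝ (⊤ : ℕ∞) g ∧
      ∀ z, fderiv ℝ g z 1 + I * fderiv ℝ g z I = a z := by
  have hK : LocallyIntegrable (fun w : ℂ => w⁻¹) volume := by
    refine locallyIntegrable_of_norm_le_rpow (C := 1) (α := 1) (by simp) (by simp) ?_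
      measurable_inv.aestronglyMeasurable
    refine Eventually.of_forall fun x => ?_
    rw [Real.rpow_neg_one]; simp
  let L := ContinuousLinearMap.mul ℝ ℂ
  let k : ℂ → ℂ := fun w => w⁻¹
  have ha1 : ContDiff ℝ 1 a := ha.of_le (by exact_mod_cast le_top)
  let G := MeasureTheory.convolution k a L volume
  have hG : ContDiff ℝ (⊤ : ℕ∞) G := hc.contDiff_convolution_right L hK ha
  have hGd : ∀ z v, fderiv ℝ G z v = ∫ w, w⁻¹ * fderiv ℝ a (z - w) v := by
    intro z v
    rw [(hc.hasFDerivAt_convolution_right L hK ha1 z).fderiv,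
      convolution_precompR_apply L hK (hc.fderiv ℝ) (ha1.continuous_fderiv one_ne_zero)]
    rfl
  have hint : ∀ z v, Integrable fun w : ℂ => w⁻¹ * fderiv ℝ a (z - w) v := by
    intro z v
    exact (hc.fderiv_apply ℝ v).convolutionExists_right L hK
      ((ha1.continuous_fderiv one_ne_zero).clm_apply continuous_const) z
  refine ⟨fun z => (2 * Real.pi : ℂ)⁻¹ * G z, contDiff_const.mul hG, fun z => ?_⟩
  have hGdiff : DifferentiableAt ℝ G z := (hG.differentiable (by simp)) z
  have key := integral_inv_mul_dbar (fun w => a (z - w)) (ha1.comp (by fun_prop))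
    (hc.comp_homeomorph (Homeomorph.subLeft z))
  have hd : ∀ w, fderiv ℝ (fun w => a (z - w)) w = - fderiv ℝ a (z - w) := by
    intro w
    have h1 : HasFDerivAt (fun w => z - w) (-ContinuousLinearMap.id ℝ ℂ) w :=
      (hasFDerivAt_id w).const_sub z
    have h2 := ((ha1.differentiable one_ne_zero (z - w)).hasFDerivAt.comp w h1).fderiv
    rw [← ContinuousLinearMap.comp_id (-fderiv ℝ a (z - w)), ContinuousLinearMap.neg_comp,
      ← ContinuousLinearMap.comp_neg]
    exact h2
  simp only [hd, neg_apply] at key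
  rw [fderiv_const_mul hGdiff]
  simp only [smul_apply, hGd, smul_eq_mul]
  have h3 : ∫ w, w⁻¹ * (-(fderiv ℝ a (z - w)) 1 + I * -(fderiv ℝ a (z - w)) I)
      = -((∫ w, w⁻¹ * fderiv ℝ a (z - w) 1) + I * ∫ w, w⁻¹ * fderiv ℝ a (z - w) I) := by
    rw [← integral_const_mul, ← integral_add (hint z 1) ((hint z I).const_mul I), ← integral_neg]
    congr 1; ext w; ring
  rw [h3, sub_zero] at key
  have hpi : (Real.pi : ℂ) ≠ 0 := by exact_mod_cast Real.pi_ne_zero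
  have hpi2 : (2 * Real.pi : ℂ) ≠ 0 := mul_ne_zero two_ne_zero hpi
  linear_combination -(2 * Real.pi : ℂ)⁻¹ * key + a z * inv_mul_cancel₀ hpi2

/-! ### Partial derivatives on the plane -/

section PartialDerivatives

variable {f g : E2 → ℝ} {x : E2}

lemma pdR_add' (i : Fin 2) (hf : DifferentiableAt ℝ f x) (hg : DifferentiableAt ℝ g x) :
    pdR i (fun y => f y + g y) x = pdR i f x + pdR i g x := by
  simp only [pdR]; rw [fderiv_fun_add hf hg]; rfl

lemma pdR_mul' (i : Fin 2) (hf : DifferentiableAt ℝ f x) (hg : DifferentiableAt ℝ g x) :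
    pdR i (fun y => f y * g y) x = pdR i f x * g x + f x * pdR i g x := by
  simp only [pdR]; rw [fderiv_fun_mul hf hg]; simp; ring

lemma pdR_const_mul' (i : Fin 2) (c : ℝ) (hf : DifferentiableAt ℝ f x) :
    pdR i (fun y => c * f y) x = c * pdR i f x := by
  simp only [pdR]; rw [fderiv_const_mul hf]; simp

lemma contDiff_pdR (i : Fin 2) (hf : ContDiff ℝ (⊤ : ℕ∞) f) : ContDiff ℝ (⊤ : ℕ∞) (pdR i f) :=
  (hf.fderiv_right (m := (⊤ : ℕ∞)) (by simp)).clm_apply contDiff_const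

lemma contDiff_pdC (i : Fin 2) {u : E2 → ℂ} (hu : ContDiff ℝ (⊤ : ℕ∞) u) :
    ContDiff ℝ (⊤ : ℕ∞) (pdC i u) :=
  (hu.fderiv_right (m := (⊤ : ℕ∞)) (by simp)).clm_apply contDiff_const

lemma pdR_comm (hf : ContDiff ℝ (⊤ : ℕ∞) f) (x : E2) :
    pdR 0 (pdR 1 f) x = pdR 1 (pdR 0 f) x := by
  have hd : DifferentiableAt ℝ (fderiv ℝ f) x :=
    ((hf.fderiv_right (m := (⊤ : ℕ∞)) (by simp)).differentiable (by simp)) x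
  have key : ∀ i j : Fin 2, pdR i (pdR j f) x =
      fderiv ℝ (fderiv ℝ f) x (EuclideanSpace.single i 1) (EuclideanSpace.single j 1) := by
    intro i j
    have h1 : pdR j f = fun y => fderiv ℝ f y (EuclideanSpace.single j 1) := rfl
    rw [pdR, h1, fderiv_clm_apply hd (differentiableAt_const _)]
    simp
  rw [key, key]
  exact (hf.contDiffAt.isSymmSndFDerivAt (by simpa using WithTop.coe_le_coe.mpr (le_top : (2 : ℕ∞) ≤ ⊤))) _ _

lemma integral_pdR_eq_zero (i : Fin 2) (hf : ContDiff ℝ (⊤ : ℕ∞) f) (hc : HasCompactSupport f) :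
    ∫ x, pdR i f x = 0 := by
  have hd := contDiff_pdR i hf
  have hcd : HasCompactSupport (pdR i f) := hc.fderiv_apply ℝ _
  have h := integral_mul_fderiv_eq_neg_fderiv_mul_of_integrable (μ := (volume : Measure E2))
    (f := fun _ : E2 => (1:ℝ)) (g := f) (v := EuclideanSpace.single i 1)
    (by simp)
    (by simpa [pdR] using! hd.continuous.integrable_of_hasCompactSupport hcd)
    (by simpa using hf.continuous.integrable_of_hasCompactSupport hc)
    (fun x _ => differentiableAt_const _) (fun x _ => (hf.differentiable (by simp)) x)
  simpa [pdR] using! h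

lemma pdC_eq (i : Fin 2) {u : E2 → ℂ} (hu : DifferentiableAt ℝ u x) :
    pdC i u x = (pdR i (fun y => (u y).re) x : ℂ) + pdR i (fun y => (u y).im) x * Complex.I := by
  have h1 := (Complex.reCLM.hasFDerivAt.comp x hu.hasFDerivAt).fderiv
  have h2 := (Complex.imCLM.hasFDerivAt.comp x hu.hasFDerivAt).fderiv
  have e1 : pdR i (fun y => (u y).re) x = (pdC i u x).re := by
    rw [pdR]; exact congrArg (fun L => L (EuclideanSpace.single i 1)) h1
  have e2 : pdR i (fun y => (u y).im) x = (pdC i u x).im := by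
    rw [pdR]; exact congrArg (fun L => L (EuclideanSpace.single i 1)) h2
  rw [e1, e2, Complex.re_add_im]

end PartialDerivatives

/-! ### The Pauli form as a sum of squares -/

/-- The difference of the two sides is the integral of the divergence of a compactly supported
vector field: `|D₁u + iD₂u|² = |D₁u|² + |D₂u|² + 2 Im(D₁u · conj (D₂u))`, and
`2 Im(D₁u · conj (D₂u)) + hB|u|²` is a divergence. -/
lemma pauli_identity (a₁ a₂ : E2 → ℝ) (h₁ : ContDiff ℝ (⊤ : ℕ∞) a₁)
    (h₂ : ContDiff ℝ (⊤ : ℕ∞) a₂) (h : ℝ) (u : E2 → ℂ) (hu : ContDiff ℝ (⊤ : ℕ∞) u)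
    (hc : HasCompactSupport u) :
    (∫ x, (‖(h : ℂ) * pdC 0 u x - Complex.I * (a₁ x : ℂ) * u x‖ ^ 2
      + ‖(h : ℂ) * pdC 1 u x - Complex.I * (a₂ x : ℂ) * u x‖ ^ 2))
    - h * ∫ x, (pdR 0 a₂ x - pdR 1 a₁ x) * ‖u x‖ ^ 2
    = ∫ x, ‖((h : ℂ) * pdC 0 u x - Complex.I * (a₁ x : ℂ) * u x)
      + Complex.I * ((h : ℂ) * pdC 1 u x - Complex.I * (a₂ x : ℂ) * u x)‖ ^ 2 := by
  set p : E2 → ℝ := fun y => (u y).re with hp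
  set q : E2 → ℝ := fun y => (u y).im with hq
  have hps : ContDiff ℝ (⊤ : ℕ∞) p := Complex.reCLM.contDiff.comp hu
  have hqs : ContDiff ℝ (⊤ : ℕ∞) q := Complex.imCLM.contDiff.comp hu
  have hpc : HasCompactSupport p := hc.comp_left (g := Complex.re) rfl
  have hqc : HasCompactSupport q := hc.comp_left (g := Complex.im) rfl
  -- The defect is the divergence of the vector field `(V 1 a₂, -V 0 a₁)`.
  let V : Fin 2 → (E2 → ℝ) → E2 → ℝ := fun j b x =>
    2 * h ^ 2 * (q x * pdR j p x) + h * (b x * (p x * p x + q x * q x))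
  have hVs : ∀ j b, ContDiff ℝ (⊤ : ℕ∞) b → ContDiff ℝ (⊤ : ℕ∞) (V j b) := by
    intro j b hb
    have := contDiff_pdR j hps
    fun_prop
  have hVc : ∀ j b, HasCompactSupport (V j b) := by
    intro j b
    refine hc.mono fun x hx => ?_
    contrapose! hx
    have hx0 : u x = 0 := by simpa using hx
    simp [V, p, q, hx0]
  have hdiff : ∀ {f : E2 → ℝ}, ContDiff ℝ (⊤ : ℕ∞) f → ∀ x, DifferentiableAt ℝ f x :=
    fun hf => hf.differentiable (by simp)
  have hVd : ∀ i j b, ContDiff ℝ (⊤ : ℕ∞) b → ∀ x, pdR i (V j b) x =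
      2 * h ^ 2 * (pdR i q x * pdR j p x + q x * pdR i (pdR j p) x)
      + h * (pdR i b x * (p x * p x + q x * q x) + b x * (2 * p x * pdR i p x + 2 * q x * pdR i q x)) := by
    intro i j b hb x
    have hP := contDiff_pdR j hps
    simp only [V]
    rw [pdR_add' i (hdiff (by fun_prop) x) (hdiff (by fun_prop) x),
      pdR_const_mul' i _ (hdiff (by fun_prop) x), pdR_const_mul' i _ (hdiff (by fun_prop) x),
      pdR_mul' i (hdiff hqs x) (hdiff hP x), pdR_mul' i (hdiff hb x) (hdiff (by fun_prop) x),
      pdR_add' i (hdiff (by fun_prop) x) (hdiff (by fun_prop) x),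
      pdR_mul' i (hdiff hps x) (hdiff hps x), pdR_mul' i (hdiff hqs x) (hdiff hqs x)]
    ring
  have hpt : ∀ x, ‖((h : ℂ) * pdC 0 u x - Complex.I * (a₁ x : ℂ) * u x)
      + Complex.I * ((h : ℂ) * pdC 1 u x - Complex.I * (a₂ x : ℂ) * u x)‖ ^ 2
      = (‖(h : ℂ) * pdC 0 u x - Complex.I * (a₁ x : ℂ) * u x‖ ^ 2
      + ‖(h : ℂ) * pdC 1 u x - Complex.I * (a₂ x : ℂ) * u x‖ ^ 2)
      - h * ((pdR 0 a₂ x - pdR 1 a₁ x) * ‖u x‖ ^ 2)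
      + (pdR 0 (V 1 a₂) x - pdR 1 (V 0 a₁) x) := by
    intro x
    have hud := hu.differentiable (by simp) x
    have hux : u x = (p x : ℂ) + q x * Complex.I := (Complex.re_add_im _).symm
    rw [hVd 0 1 a₂ h₂, hVd 1 0 a₁ h₁, pdR_comm hps, pdC_eq 0 hud, pdC_eq 1 hud, hux]
    simp only [← hp, ← hq, Complex.sq_norm, Complex.normSq_apply]
    simp
    ring
  have hu0 := contDiff_pdC 0 hu
  have hu1 := contDiff_pdC 1 hu
  have hb1 := (contDiff_pdR 0 h₂).continuous
  have hb2 := (contDiff_pdR 1 h₁).continuous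
  have c1 := h₁.continuous
  have c2 := h₂.continuous
  have c3 := hu.continuous
  have c4 := hu0.continuous
  have c5 := hu1.continuous
  have hz : ∀ i, ∀ x ∉ tsupport u, pdC i u x = 0 := fun i x hx => by
    rw [pdC, fderiv_of_notMem_tsupport ℝ hx]; simp
  have I1 : Integrable fun x => (‖(h : ℂ) * pdC 0 u x - Complex.I * (a₁ x : ℂ) * u x‖ ^ 2
      + ‖(h : ℂ) * pdC 1 u x - Complex.I * (a₂ x : ℂ) * u x‖ ^ 2) := by
    refine Continuous.integrable_of_hasCompactSupport (by fun_prop) ?_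
    refine HasCompactSupport.intro hc.isCompact fun x hx => ?_
    simp [hz _ x hx, image_eq_zero_of_notMem_tsupport hx]
  have I2 : Integrable fun x => (pdR 0 a₂ x - pdR 1 a₁ x) * ‖u x‖ ^ 2 := by
    refine Continuous.integrable_of_hasCompactSupport (by fun_prop) ?_
    refine HasCompactSupport.intro hc.isCompact fun x hx => ?_
    simp [image_eq_zero_of_notMem_tsupport hx]
  have I3 : ∀ i j b, ContDiff ℝ (⊤ : ℕ∞) b → Integrable (pdR i (V j b)) := fun i j b hb =>
    (contDiff_pdR i (hVs j b hb)).continuous.integrable_of_hasCompactSupport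
      ((hVc j b).fderiv_apply ℝ _)
  refine Eq.symm ((integral_congr_ae (Eventually.of_forall hpt)).trans ?_)
  refine (integral_add (I1.sub (I2.const_mul h)) ((I3 0 1 a₂ h₂).sub (I3 1 0 a₁ h₁))).trans ?_
  have e1 := integral_sub I1 (I2.const_mul h)
  have e2 := integral_sub (I3 0 1 a₂ h₂) (I3 1 0 a₁ h₁)
  rw [integral_pdR_eq_zero 0 (hVs 1 a₂ h₂) (hVc 1 a₂),
    integral_pdR_eq_zero 1 (hVs 0 a₁ h₁) (hVc 0 a₁), sub_zero] at e2
  rw [integral_const_mul] at e1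
  exact (congrArg₂ (· + ·) e1 e2).trans (add_zero _)

/-! ### Transfer to `Ω` -/

open Complex in
lemma exists_dbar_E2 (a : E2 → ℂ) (ha : ContDiff ℝ (⊤ : ℕ∞) a) (hc : HasCompactSupport a) :
    ∃ g : E2 → ℂ, ContDiff ℝ (⊤ : ℕ∞) g ∧ ∀ x, pdC 0 g x + I * pdC 1 g x = a x := by
  let e : ℂ ≃ₗᵢ[ℝ] E2 := Complex.orthonormalBasisOneI.repr
  have h0 : e.symm (EuclideanSpace.single 0 1) = 1 := by simp [e]
  have h1 : e.symm (EuclideanSpace.single 1 1) = I := by simp [e]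
  obtain ⟨g, hg, hga⟩ := exists_dbar (fun z => a (e z)) (ha.comp e.contDiff)
    (hc.comp_homeomorph e.toHomeomorph)
  have hd : ∀ i x, pdC i (fun x => g (e.symm x)) x
      = fderiv ℝ g (e.symm x) (e.symm (EuclideanSpace.single i 1)) := by
    intro i x
    have h2 := ((hg.differentiable (by simp) (e.symm x)).hasFDerivAt.comp x
      e.symm.toContinuousLinearEquiv.hasFDerivAt).fderiv
    exact congrArg (fun L => L (EuclideanSpace.single i 1)) h2
  refine ⟨fun x => g (e.symm x), hg.comp e.symm.contDiff, fun x => ?_⟩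
  rw [hd, hd, h0, h1, hga]
  simp

lemma pdC_eq_zero (i : Fin 2) {u : E2 → ℂ} {x : E2} (hx : x ∉ tsupport u) : pdC i u x = 0 := by
  rw [pdC, fderiv_of_notMem_tsupport ℝ hx]; simp

lemma setIntegral_sq_norm {Ω : Set E2} {u : E2 → ℂ} (hu : IsCptSmoothIn Ω u) :
    ∫ x in Ω, ‖u x‖ ^ 2 = ∫ x, ‖u x‖ ^ 2 :=
  setIntegral_eq_integral_of_forall_compl_eq_zero fun x hx => by
    simp [image_eq_zero_of_notMem_tsupport fun h => hx (hu.2.2 h)]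

lemma integrable_sq_norm {Ω : Set E2} {u : E2 → ℂ} (hu : IsCptSmoothIn Ω u) :
    Integrable fun x => ‖u x‖ ^ 2 := by
  have := hu.1.continuous
  refine Continuous.integrable_of_hasCompactSupport (by fun_prop) ?_
  exact HasCompactSupport.intro hu.2.1.isCompact fun x hx => by
    simp [image_eq_zero_of_notMem_tsupport hx]

lemma setIntegral_sq_norm_pos {Ω : Set E2} {u : E2 → ℂ} (hu : IsCptSmoothIn Ω u) (h0 : u ≠ 0) :
    0 < ∫ x in Ω, ‖u x‖ ^ 2 := by
  rw [setIntegral_sq_norm hu]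
  have := hu.1.continuous
  obtain ⟨x, hx⟩ := Function.ne_iff.mp h0
  refine Continuous.integral_pos_of_hasCompactSupport_nonneg_nonzero (x := x) (by fun_prop) ?_
    (fun x => by positivity) (by simpa using hx)
  exact HasCompactSupport.intro hu.2.1.isCompact fun x hx => by
    simp [image_eq_zero_of_notMem_tsupport hx]

/-- On `C_c^∞(Ω)` the Dirichlet form is `∫ |∂₁v + i∂₂v|²`. -/
lemma dirichlet_eq {Ω : Set E2} {v : E2 → ℂ} (hv : IsCptSmoothIn Ω v) :
    ∫ x in Ω, (‖pdC 0 v x‖ ^ 2 + ‖pdC 1 v x‖ ^ 2)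
      = ∫ x, ‖pdC 0 v x + Complex.I * pdC 1 v x‖ ^ 2 := by
  rw [setIntegral_eq_integral_of_forall_compl_eq_zero fun x hx => by
    simp [pdC_eq_zero _ fun h => hx (hv.2.2 h)]]
  have := pauli_identity (fun _ => 0) (fun _ => 0) contDiff_const contDiff_const 1 v hv.1 hv.2.1
  simpa [pdR] using this

/-- The Pauli form for `A` on `Ω` only sees `u` on `Ω`, so `A` may be replaced by any smooth field
`a` on the plane with the same germ at every point of `Ω`. -/
lemma pauliQ_eq {Ω : Set E2} {A₁ A₂ a₁ a₂ : E2 → ℝ} (h₁ : ContDiff ℝ (⊤ : ℕ∞) a₁)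
    (h₂ : ContDiff ℝ (⊤ : ℕ∞) a₂) (e₁ : ∀ x ∈ Ω, a₁ =ᶠ[𝓝 x] A₁) (e₂ : ∀ x ∈ Ω, a₂ =ᶠ[𝓝 x] A₂)
    (h : ℝ) {u : E2 → ℂ} (hu : IsCptSmoothIn Ω u) (hΩ : MeasurableSet Ω) :
    pauliQ Ω A₁ A₂ (fun x => pdR 0 A₂ x - pdR 1 A₁ x) h u
      = ∫ x, ‖((h : ℂ) * pdC 0 u x - Complex.I * (a₁ x : ℂ) * u x)
      + Complex.I * ((h : ℂ) * pdC 1 u x - Complex.I * (a₂ x : ℂ) * u x)‖ ^ 2 := by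
  rw [← pauli_identity a₁ a₂ h₁ h₂ h u hu.1 hu.2.1, pauliQ]
  have hz : ∀ x ∉ Ω, x ∉ tsupport u := fun x hx h => hx (hu.2.2 h)
  refine congrArg₂ (· - ·) ?_ (congrArg (h * ·) ?_)
  · refine (setIntegral_congr_fun hΩ fun x hx => ?_).trans
      (setIntegral_eq_integral_of_forall_compl_eq_zero fun x hx => ?_)
    · simp only [← (e₁ x hx).self_of_nhds, ← (e₂ x hx).self_of_nhds]
    · simp [pdC_eq_zero _ (hz x hx), image_eq_zero_of_notMem_tsupport (hz x hx)]
  · refine (setIntegral_congr_fun hΩ fun x hx => ?_).trans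
      (setIntegral_eq_integral_of_forall_compl_eq_zero fun x hx => ?_)
    · simp only [pdR, ← (e₁ x hx).fderiv_eq, ← (e₂ x hx).fderiv_eq]
    · simp [image_eq_zero_of_notMem_tsupport (hz x hx)]

lemma exists_cutoff {Ω U : Set E2} (hΩb : Bornology.IsBounded Ω) (hU : IsOpen U)
    (hclU : closure Ω ⊆ U) :
    ∃ ψ : E2 → ℝ, ContDiff ℝ (⊤ : ℕ∞) ψ ∧ HasCompactSupport ψ ∧ tsupport ψ ⊆ U ∧
      ∀ x ∈ Ω, ψ =ᶠ[𝓝 x] fun _ => 1 := by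
  obtain ⟨K, hK, hΩK, hKU⟩ := exists_compact_between hΩb.isCompact_closure hU hclU
  obtain ⟨ψ, h1, h0, -⟩ := exists_contMDiffMap_one_nhds_of_subset_interior (n := (⊤ : ℕ∞))
    (modelWithCornersSelf ℝ E2) isClosed_closure hΩK
  have hts : tsupport ψ ⊆ K :=
    closure_minimal (fun x hx => by_contra fun h => hx (h0 x h)) hK.isClosed
  refine ⟨ψ, ψ.contMDiff.contDiff, HasCompactSupport.intro hK h0, hts.trans hKU, fun x hx => ?_⟩
  exact h1.filter_mono (nhds_le_nhdsSet (subset_closure hx))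

lemma contDiff_cutoff {U : Set E2} (hU : IsOpen U) {ψ A : E2 → ℝ} (hψ : ContDiff ℝ (⊤ : ℕ∞) ψ)
    (hs : tsupport ψ ⊆ U) (hA : ContDiffOn ℝ (⊤ : ℕ∞) A U) :
    ContDiff ℝ (⊤ : ℕ∞) fun x => ψ x * A x := by
  refine contDiff_iff_contDiffAt.mpr fun x => ?_
  by_cases hx : x ∈ tsupport fun x => ψ x * A x
  swap
  · exact contDiffAt_const.congr_of_eventuallyEq (notMem_tsupport_iff_eventuallyEq.mp hx)
  have hxU : x ∈ U := hs (closure_mono (Function.support_mul_subset_left ψ A) hx)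
  exact hψ.contDiffAt.mul (hA.contDiffAt (hU.mem_nhds hxU))

lemma lambdaD_nonneg (Ω : Set E2) : 0 ≤ lambdaD Ω := by
  refine Real.sInf_nonneg ?_
  rintro r ⟨v, -, -, rfl⟩
  exact div_nonneg (integral_nonneg fun x => by positivity) (integral_nonneg fun x => by positivity)

lemma lambdaD_mul_le {Ω : Set E2} {v : E2 → ℂ} (hv : IsCptSmoothIn Ω v) (h0 : v ≠ 0) :
    lambdaD Ω * ∫ x in Ω, ‖v x‖ ^ 2 ≤ ∫ x, ‖pdC 0 v x + Complex.I * pdC 1 v x‖ ^ 2 := by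
  rw [← dirichlet_eq hv, ← le_div_iff₀ (setIntegral_sq_norm_pos hv h0)]
  refine csInf_le ⟨0, ?_⟩ ⟨v, hv, h0, rfl⟩
  rintro r ⟨v, -, -, rfl⟩
  exact div_nonneg (integral_nonneg fun x => by positivity) (integral_nonneg fun x => by positivity)

/-! ### The gauge-like substitution -/

open Complex in
lemma pdC_gauge (i : Fin 2) {g u : E2 → ℂ} {x : E2} (c : ℂ) (hg : DifferentiableAt ℝ g x)
    (hu : DifferentiableAt ℝ u x) :
    pdC i (fun y => exp (c * g y) * u y) x
      = exp (c * g x) * (pdC i u x + c * pdC i g x * u x) := by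
  have h1 := (((hg.hasFDerivAt.const_mul c).cexp).mul hu.hasFDerivAt).fderiv
  have h2 := congrArg (fun L => L (EuclideanSpace.single i 1)) h1
  refine h2.trans ?_
  simp [pdC]
  ring

open Complex in
/-- The lower bound for a single test function `u`, obtained by comparing it with
`v = e^{-g/h} u`; each of the two comparisons costs a factor `e^{-2C/h}`. -/
lemma key_bound {Ω : Set E2} {a₁ a₂ : E2 → ℝ} {g : E2 → ℂ}
    (h₁ : ContDiff ℝ (⊤ : ℕ∞) a₁) (h₂ : ContDiff ℝ (⊤ : ℕ∞) a₂)
    (hg : ContDiff ℝ (⊤ : ℕ∞) g)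
    (hga : ∀ x, pdC 0 g x + I * pdC 1 g x = I * (a₁ x + I * a₂ x))
    {C : ℝ} (hC : ∀ x ∈ Ω, |(g x).re| ≤ C) {h : ℝ} (hh : 0 < h)
    {u : E2 → ℂ} (hu : IsCptSmoothIn Ω u) (hu0 : u ≠ 0) :
    lambdaD Ω * h ^ 2 * Real.exp (-(4 * C) / h) * ∫ x in Ω, ‖u x‖ ^ 2
      ≤ ∫ x, ‖((h : ℂ) * pdC 0 u x - I * (a₁ x : ℂ) * u x)
        + I * ((h : ℂ) * pdC 1 u x - I * (a₂ x : ℂ) * u x)‖ ^ 2 := by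
  have hhC : (h : ℂ) ≠ 0 := by exact_mod_cast hh.ne'
  let v : E2 → ℂ := fun y => exp (-(h : ℂ)⁻¹ * g y) * u y
  have hvts : tsupport v ⊆ tsupport u :=
    closure_mono (Function.support_mul_subset_right _ _)
  have hv : IsCptSmoothIn Ω v :=
    ⟨(contDiff_const.mul hg).cexp.mul hu.1, hu.2.1.mul_left, hvts.trans hu.2.2⟩
  have hv0 : v ≠ 0 := by
    obtain ⟨x, hx⟩ := Function.ne_iff.mp hu0
    exact Function.ne_iff.mpr ⟨x, mul_ne_zero (exp_ne_zero _) hx⟩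
  have hnorm : ∀ x, ‖exp (-(h : ℂ)⁻¹ * g x)‖ = Real.exp (-(g x).re / h) := by
    intro x
    rw [norm_exp]
    congr 1
    rw [← ofReal_inv, ← ofReal_neg, re_ofReal_mul]
    ring
  have hsq : ∀ t : ℝ, Real.exp t ^ 2 = Real.exp (2 * t) := fun t => by
    rw [← Real.exp_nat_mul]; norm_num
  have hrel : ∀ x, (h : ℂ) * (pdC 0 v x + I * pdC 1 v x) = exp (-(h : ℂ)⁻¹ * g x) *
      (((h : ℂ) * pdC 0 u x - I * (a₁ x : ℂ) * u x)
        + I * ((h : ℂ) * pdC 1 u x - I * (a₂ x : ℂ) * u x)) := by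
    intro x
    have d1 := hg.differentiable (by simp) x
    have d2 := hu.1.differentiable (by simp) x
    simp only [v]
    rw [pdC_gauge 0 _ d1 d2, pdC_gauge 1 _ d1 d2]
    have := hga x
    have hcan : (h : ℂ) * (h : ℂ)⁻¹ = 1 := mul_inv_cancel₀ hhC
    linear_combination (-exp (-(h : ℂ)⁻¹ * g x) * u x) * this
      - exp (-(h : ℂ)⁻¹ * g x) * u x * (pdC 0 g x + I * pdC 1 g x) * hcan
  have hP : ∀ x, h ^ 2 * Real.exp (-(2 * C) / h) * ‖pdC 0 v x + I * pdC 1 v x‖ ^ 2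
      ≤ ‖((h : ℂ) * pdC 0 u x - I * (a₁ x : ℂ) * u x)
        + I * ((h : ℂ) * pdC 1 u x - I * (a₂ x : ℂ) * u x)‖ ^ 2 := by
    intro x
    by_cases hx : x ∈ tsupport u
    · have h3 := congrArg (fun z => ‖z‖ ^ 2) (hrel x)
      simp only [norm_mul, hnorm, mul_pow, norm_real, Real.norm_eq_abs, sq_abs, hsq] at h3
      have h4 : Real.exp (-(2 * C) / h) * Real.exp (2 * (-(g x).re / h)) ≤ 1 := by
        rw [← Real.exp_add, Real.exp_le_one_iff]
        have := neg_le_of_abs_le (hC x (hu.2.2 hx))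
        have e : -(2 * C) / h + 2 * (-(g x).re / h) = -(2 * (C + (g x).re)) / h := by ring
        rw [e]
        exact div_nonpos_of_nonpos_of_nonneg (by linarith) hh.le
      set N := ‖((h : ℂ) * pdC 0 u x - I * (a₁ x : ℂ) * u x)
        + I * ((h : ℂ) * pdC 1 u x - I * (a₂ x : ℂ) * u x)‖ ^ 2 with hN
      have hN0 : 0 ≤ N := by positivity
      calc _ = Real.exp (-(2 * C) / h) * (h ^ 2 * ‖pdC 0 v x + I * pdC 1 v x‖ ^ 2) := by ring
        _ = (Real.exp (-(2 * C) / h) * Real.exp (2 * (-(g x).re / h))) * N := by rw [h3]; ring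
        _ ≤ 1 * N := mul_le_mul_of_nonneg_right h4 hN0
        _ = N := one_mul N
    · have hx' : x ∉ tsupport v := fun h => hx (hvts h)
      simp only [pdC_eq_zero _ hx', mul_zero, add_zero, norm_zero]
      simp only [ne_eq, OfNat.ofNat_ne_zero, not_false_eq_true, zero_pow, mul_zero]
      positivity
  have hN : ∀ x, Real.exp (-(2 * C) / h) * ‖u x‖ ^ 2 ≤ ‖v x‖ ^ 2 := by
    intro x
    by_cases hx : x ∈ Ω
    · simp only [v, norm_mul, hnorm, mul_pow, hsq]
      refine mul_le_mul_of_nonneg_right (Real.exp_le_exp.mpr ?_) (by positivity)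
      have := le_of_abs_le (hC x hx)
      rw [← mul_div_assoc]
      exact div_le_div_of_nonneg_right (by linarith) hh.le
    · have : u x = 0 := image_eq_zero_of_notMem_tsupport fun h => hx (hu.2.2 h)
      simp [v, this]
  have hN' : Real.exp (-(2 * C) / h) * ∫ x in Ω, ‖u x‖ ^ 2 ≤ ∫ x in Ω, ‖v x‖ ^ 2 := by
    rw [setIntegral_sq_norm hu, setIntegral_sq_norm hv, ← integral_const_mul]
    exact integral_mono ((integrable_sq_norm hu).const_mul _) (integrable_sq_norm hv) hN
  have hint : ∀ {w : E2 → ℂ} {b₁ b₂ : E2 → ℝ} (k : ℝ), IsCptSmoothIn Ω w → Continuous b₁ →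
      Continuous b₂ → Integrable fun x => ‖((k : ℂ) * pdC 0 w x - I * (b₁ x : ℂ) * w x)
        + I * ((k : ℂ) * pdC 1 w x - I * (b₂ x : ℂ) * w x)‖ ^ 2 := by
    intro w b₁ b₂ k hw c1 c2
    have c3 := hw.1.continuous
    have c4 := (contDiff_pdC 0 hw.1).continuous
    have c5 := (contDiff_pdC 1 hw.1).continuous
    refine Continuous.integrable_of_hasCompactSupport (by fun_prop) ?_
    refine HasCompactSupport.intro hw.2.1.isCompact fun x hx => ?_
    simp [pdC_eq_zero _ hx, image_eq_zero_of_notMem_tsupport hx]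
  have hP' : h ^ 2 * Real.exp (-(2 * C) / h) * ∫ x, ‖pdC 0 v x + I * pdC 1 v x‖ ^ 2
      ≤ ∫ x, ‖((h : ℂ) * pdC 0 u x - I * (a₁ x : ℂ) * u x)
        + I * ((h : ℂ) * pdC 1 u x - I * (a₂ x : ℂ) * u x)‖ ^ 2 := by
    rw [← integral_const_mul]
    refine integral_mono (Integrable.const_mul ?_ _) (hint h hu h₁.continuous h₂.continuous) hP
    simpa using hint (b₁ := fun _ => 0) (b₂ := fun _ => 0) 1 hv continuous_const continuous_const
  have hexp : Real.exp (-(4 * C) / h) = Real.exp (-(2 * C) / h) * Real.exp (-(2 * C) / h) := by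
    rw [← Real.exp_add]; congr 1; ring
  calc _ = h ^ 2 * Real.exp (-(2 * C) / h) *
        (lambdaD Ω * (Real.exp (-(2 * C) / h) * ∫ x in Ω, ‖u x‖ ^ 2)) := by rw [hexp]; ring
    _ ≤ h ^ 2 * Real.exp (-(2 * C) / h) * (lambdaD Ω * ∫ x in Ω, ‖v x‖ ^ 2) :=
      mul_le_mul_of_nonneg_left (mul_le_mul_of_nonneg_left hN' (lambdaD_nonneg Ω)) (by positivity)
    _ ≤ h ^ 2 * Real.exp (-(2 * C) / h) * ∫ x, ‖pdC 0 v x + I * pdC 1 v x‖ ^ 2 :=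
      mul_le_mul_of_nonneg_left (lambdaD_mul_le hv hv0) (by positivity)
    _ ≤ _ := hP'

/-- Ekholm--Kovařík--Portmann: for a simply connected bounded open `Ω` and a
magnetic field not vanishing identically, there is `ε > 0` with
`λ_{P₋}(h) ≥ λ^D(Ω) h² exp(−ε/h)` for all `h > 0`. -/
theorem stmt3 (Ω : Set E2) (hΩo : IsOpen Ω) (hΩne : Ω.Nonempty)
    (hΩb : Bornology.IsBounded Ω)
    (hsc : SimplyConnectedSpace Ω)
    (U : Set E2) (hU : IsOpen U) (hclU : closure Ω ⊆ U)
    (A₁ A₂ : E2 → ℝ) (hA₁ : ContDiffOn ℝ (⊤ : ℕ∞) A₁ U) (hA₂ : ContDiffOn ℝ (⊤ : ℕ∞) A₂ U)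
    (B : E2 → ℝ) (hB : B = fun x => pdR 0 A₂ x - pdR 1 A₁ x)
    (hBne : ∃ x ∈ Ω, B x ≠ 0) :
    ∃ ε > 0, ∀ h : ℝ, 0 < h →
      lambdaP Ω A₁ A₂ B h ≥ lambdaD Ω * h ^ 2 * Real.exp (-ε / h) := by
  obtain ⟨ψ, hψ, hψc, hψU, hψ1⟩ := exists_cutoff hΩb hU hclU
  set a₁ : E2 → ℝ := fun x => ψ x * A₁ x with ha₁
  set a₂ : E2 → ℝ := fun x => ψ x * A₂ x with ha₂
  have h₁ : ContDiff ℝ (⊤ : ℕ∞) a₁ := contDiff_cutoff hU hψ hψU hA₁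
  have h₂ : ContDiff ℝ (⊤ : ℕ∞) a₂ := contDiff_cutoff hU hψ hψU hA₂
  have e₁ : ∀ x ∈ Ω, a₁ =ᶠ[𝓝 x] A₁ := fun x hx => by
    filter_upwards [hψ1 x hx] with y hy using by simp [ha₁, hy]
  have e₂ : ∀ x ∈ Ω, a₂ =ᶠ[𝓝 x] A₂ := fun x hx => by
    filter_upwards [hψ1 x hx] with y hy using by simp [ha₂, hy]
  obtain ⟨g, hg, hga⟩ := exists_dbar_E2
    (fun x => Complex.I * ((a₁ x : ℂ) + Complex.I * (a₂ x : ℂ)))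
    (contDiff_const.mul ((Complex.ofRealCLM.contDiff.comp h₁).add
      (contDiff_const.mul (Complex.ofRealCLM.contDiff.comp h₂))))
    (HasCompactSupport.intro hψc.isCompact fun x hx => by
      simp [ha₁, ha₂, image_eq_zero_of_notMem_tsupport hx])
  obtain ⟨C, hC⟩ := hΩb.isCompact_closure.exists_bound_of_continuousOn
    (f := fun x => (g x).re) (Complex.continuous_re.comp hg.continuous).continuousOn
  have hC' : ∀ x ∈ Ω, |(g x).re| ≤ C := fun x hx => hC x (subset_closure hx)
  have hC0 : 0 ≤ C := by
    obtain ⟨x, hx⟩ := hΩne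
    exact (abs_nonneg _).trans (hC' x hx)
  refine ⟨4 * C + 1, by linarith, fun h hh => ?_⟩
  by_cases hex : ∃ u : E2 → ℂ, IsCptSmoothIn Ω u ∧ u ≠ 0
  · obtain ⟨u₀, hu₀, hu₀'⟩ := hex
    refine le_csInf ⟨_, u₀, hu₀, hu₀', rfl⟩ ?_
    rintro r ⟨u, hu, hu0, rfl⟩
    rw [le_div_iff₀ (setIntegral_sq_norm_pos hu hu0), hB,
      pauliQ_eq h₁ h₂ e₁ e₂ h hu hΩo.measurableSet]
    refine le_trans ?_ (key_bound h₁ h₂ hg hga hC' hh hu hu0)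
    refine mul_le_mul_of_nonneg_right (mul_le_mul_of_nonneg_left ?_ ?_)
      (setIntegral_sq_norm_pos hu hu0).le
    · exact Real.exp_le_exp.mpr (div_le_div_of_nonneg_right (by linarith) hh.le)
    · exact mul_nonneg (lambdaD_nonneg Ω) (sq_nonneg h)
  · -- without test functions both infima are `sInf ∅ = 0`
    have hP : lambdaP Ω A₁ A₂ B h = 0 := by
      refine (congrArg sInf (Set.eq_empty_of_forall_notMem ?_)).trans Real.sInf_empty
      rintro r ⟨u, hu, hu0, -⟩
      exact hex ⟨u, hu, hu0⟩
    have hD : lambdaD Ω = 0 := by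
      refine (congrArg sInf (Set.eq_empty_of_forall_notMem ?_)).trans Real.sInf_empty
      rintro r ⟨u, hu, hu0, -⟩
      exact hex ⟨u, hu, hu0⟩
    simp [hP, hD]
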